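/- Let n be odd with n > 1, and let C_n be the cycle graph on n vertices. Then ϑ_2(C_n) = 2·ϑ(C_n), and ϑ_k(C_n) = n for every k ≥ 3. -/

import Mathlib

open Finset

/-- The sum of the `k` largest eigenvalues (counted with multiplicity) of a
Hermitian real matrix, realized as the supremum over all choices of
`min k n` eigenvalues of their sum. -/
noncomputable def sumKEig {V : Type*} [Fintype V] [DecidableEq V] (k : ℕ)
    (A : Matrix V V ℝ) (hA : A.IsHermitian) : ℝ :=
  sSup {x : ℝ | ∃ s : Finset V, s.card = min k (Fintype.card V) ∧
    x = ∑ i ∈ s, hA.eigenvalues i}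

/-- The generalized theta number `ϑ_k(G)`: the infimum of the sum of the `k`
largest eigenvalues over all real symmetric matrices `A` with `A i j = 1`
whenever `(i,j)` is not an edge of `G`. -/
noncomputable def gtheta {V : Type*} [Fintype V] [DecidableEq V]
    (k : ℕ) (G : SimpleGraph V) : ℝ :=
  sInf {x : ℝ | ∃ (A : Matrix V V ℝ) (hA : A.IsHermitian),
    (∀ i j, ¬ G.Adj i j → A i j = 1) ∧ x = sumKEig k A hA}

/-!
Write `c = cos (π / n)`; the proof pins `ϑ(C_n)` and `ϑ_k(C_n)` by semidefinite duality.

*Upper bounds.* The `k` largest eigenvalues sum to at most `k` times the largest one, so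
`ϑ_2 ≤ 2 ϑ`. An eigenvector of the cycle for `2x` satisfies the Chebyshev recurrence, and going once
around the cycle forces `T_n(x) = 1`; for odd `n` this gives `x ≥ -c`, so the Hoffman–Lovász ratio
bound yields `ϑ(C_n) ≤ n c / (1 + c)`. The all-ones matrix gives `ϑ_k ≤ n`.

*Lower bounds.* By Ky Fan's principle, `∑ i j, X i j ≤ ϑ_k(G)` whenever `0 ≤ X ≤ 1`, `tr X = k` and
`X` vanishes on the edges. Let `J / n` be the projection onto the constants and `P` the projection
onto the Fourier modes of frequency `(n - 1) / 2`, whose entries on edges are `-2c / n`. Choosing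
`X = α J / n + β P + γ (1 - J / n - P)` suitably gives `2 n c / (1 + c) ≤ ϑ_2` and `n ≤ ϑ_3`.
Finally `n` is the trace of every feasible matrix, and once the top three eigenvalues of a matrix
sum to at least its trace, so do the top `k` for every `k ≥ 3`.
-/

open Matrix SimpleGraph
open scoped MatrixOrder

section WeightedSums

variable {ι : Type*} {l w : ι → ℝ} {s : Finset ι}

lemma exists_threshold_of_forall_sum_le [Finite ι]
    (hs : ∀ t : Finset ι, #t = #s → ∑ i ∈ t, l i ≤ ∑ i ∈ s, l i) :
    ∃ c, (∀ i ∈ s, c ≤ l i) ∧ ∀ j ∉ s, l j ≤ c := by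
  classical
  rcases s.eq_empty_or_nonempty with rfl | hne
  · obtain ⟨c, hc⟩ := (Set.finite_range l).bddAbove
    exact ⟨c, by simp, fun j _ ↦ hc ⟨j, rfl⟩⟩
  obtain ⟨i, hi, hmin⟩ := s.exists_min_image l hne
  refine ⟨l i, hmin, fun j hj ↦ ?_⟩
  have hj' : j ∉ s.erase i := fun h ↦ hj (mem_of_mem_erase h)
  have hswap := hs (insert j (s.erase i)) (by
    rw [card_insert_of_notMem hj', card_erase_add_one hi])
  rw [sum_insert hj', ← add_sum_erase s l hi] at hswap
  exact le_of_add_le_add_right hswap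

lemma sum_mul_le_sum_of_forall_sum_le [Fintype ι]
    (hs : ∀ t : Finset ι, #t = #s → ∑ i ∈ t, l i ≤ ∑ i ∈ s, l i)
    (hw₀ : ∀ i, 0 ≤ w i) (hw₁ : ∀ i, w i ≤ 1) (hw : ∑ i, w i = #s) :
    ∑ i, l i * w i ≤ ∑ i ∈ s, l i := by
  classical
  obtain ⟨c, hle, hge⟩ := exists_threshold_of_forall_sum_le hs
  have hterm (i : ι) : (l i - c) * w i ≤ if i ∈ s then l i - c else 0 := by
    split_ifs with hi
    · exact mul_le_of_le_one_right (sub_nonneg.2 (hle i hi)) (hw₁ i)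
    · exact mul_nonpos_of_nonpos_of_nonneg (sub_nonpos.2 (hge i hi)) (hw₀ i)
  have hsum := sum_le_sum fun i (_ : i ∈ univ) ↦ hterm i
  simp only [sub_mul, sum_sub_distrib, ← mul_sum, hw, sum_ite_mem, univ_inter, sum_const,
    nsmul_eq_mul] at hsum
  linarith

end WeightedSums

section SumKEig

variable {V : Type*} [Fintype V] [DecidableEq V] {A X : Matrix V V ℝ} (hA : A.IsHermitian)
  (k : ℕ)

lemma finite_setOf_sum_eigenvalues :
    {x : ℝ | ∃ s : Finset V, #s = min k (Fintype.card V) ∧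
      x = ∑ i ∈ s, hA.eigenvalues i}.Finite :=
  (Set.finite_range fun s : Finset V ↦ ∑ i ∈ s, hA.eigenvalues i).subset <| by
    rintro _ ⟨s, -, rfl⟩
    exact ⟨s, rfl⟩

lemma exists_sumKEig_eq_sum :
    ∃ s : Finset V, #s = min k (Fintype.card V) ∧
      sumKEig k A hA = ∑ i ∈ s, hA.eigenvalues i := by
  obtain ⟨s, -, hs⟩ := exists_subset_card_eq (s := (univ : Finset V)) (min_le_right k _)
  exact Set.Nonempty.csSup_mem (s := {x | ∃ s : Finset V, #s = min k (Fintype.card V) ∧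
    x = ∑ i ∈ s, hA.eigenvalues i}) ⟨_, s, hs, rfl⟩ (finite_setOf_sum_eigenvalues hA k)

variable {k} in
lemma sum_eigenvalues_le_sumKEig {s : Finset V} (hs : #s = min k (Fintype.card V)) :
    ∑ i ∈ s, hA.eigenvalues i ≤ sumKEig k A hA :=
  le_csSup (finite_setOf_sum_eigenvalues hA k).bddAbove ⟨s, hs, rfl⟩

variable {k} in
lemma sum_eigenvalues_mul_le_sumKEig {w : V → ℝ} (hw₀ : ∀ i, 0 ≤ w i) (hw₁ : ∀ i, w i ≤ 1)
    (hw : ∑ i, w i = (min k (Fintype.card V) : ℕ)) :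
    ∑ i, hA.eigenvalues i * w i ≤ sumKEig k A hA := by
  obtain ⟨s, hcard, hsum⟩ := exists_sumKEig_eq_sum hA k
  rw [hsum]
  refine sum_mul_le_sum_of_forall_sum_le (fun t ht ↦ ?_) hw₀ hw₁ (by rw [hw, hcard])
  exact hsum ▸ sum_eigenvalues_le_sumKEig hA (ht.trans hcard)

lemma trace_mul_eq_sum_eigenvalues_mul :
    (A * X).trace = ∑ i, hA.eigenvalues i *
      ((hA.eigenvectorUnitary : Matrix V V ℝ)ᴴ * X * hA.eigenvectorUnitary) i i := by
  set U : Matrix V V ℝ := ↑hA.eigenvectorUnitary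
  have hspec : A = U * diagonal hA.eigenvalues * Uᴴ := by
    simpa [Unitary.conjStarAlgAut_apply, Function.comp_def] using! hA.spectral_theorem
  calc (A * X).trace = (U * (diagonal hA.eigenvalues * (Uᴴ * X))).trace := by
        conv_lhs => rw [hspec]
        simp only [Matrix.mul_assoc]
    _ = (diagonal hA.eigenvalues * (Uᴴ * X * U)).trace := by
        rw [trace_mul_comm, Matrix.mul_assoc]
    _ = _ := by simp [trace, diagonal_mul]

variable {k} in
/-- One direction of Ky Fan's maximum principle. -/
theorem trace_mul_le_sumKEig (hX₀ : 0 ≤ X) (hX₁ : X ≤ 1)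
    (htr : X.trace = (min k (Fintype.card V) : ℕ)) : (A * X).trace ≤ sumKEig k A hA := by
  rw [trace_mul_eq_sum_eigenvalues_mul hA]
  set U : Matrix V V ℝ := ↑hA.eigenvectorUnitary
  have hUstar : Uᴴ * U = 1 := Unitary.coe_star_mul_self hA.eigenvectorUnitary
  have hU : U * Uᴴ = 1 := Unitary.coe_mul_star_self hA.eigenvectorUnitary
  refine sum_eigenvalues_mul_le_sumKEig hA (fun i ↦ ?_) (fun i ↦ ?_) ?_
  · exact ((nonneg_iff_posSemidef.1 hX₀).conjTranspose_mul_mul_same U).diag_nonneg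
  · have h := ((Matrix.le_iff.1 hX₁).conjTranspose_mul_mul_same U).diag_nonneg (i := i)
    rw [Matrix.mul_sub, Matrix.sub_mul, Matrix.mul_one, hUstar, Matrix.sub_apply, one_apply_eq] at h
    exact sub_nonneg.1 h
  · calc (Uᴴ * X * U).trace = X.trace := by
          rw [trace_mul_comm, ← Matrix.mul_assoc, hU, Matrix.one_mul]
      _ = _ := htr

lemma div_mul_trace_le_sumKEig :
    (min k (Fintype.card V) : ℕ) / Fintype.card V * A.trace ≤ sumKEig k A hA := by
  have hle : ((min k (Fintype.card V) : ℕ) : ℝ) ≤ Fintype.card V := mod_cast min_le_right _ _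
  have h := sum_eigenvalues_mul_le_sumKEig hA (k := k)
    (w := fun _ ↦ (min k (Fintype.card V) : ℕ) / Fintype.card V) (fun _ ↦ by positivity)
    (fun _ ↦ div_le_one_of_le₀ hle (by positivity))
    (by
      rw [sum_const, card_univ, nsmul_eq_mul]
      exact mul_div_cancel_of_imp' fun h0 ↦ le_antisymm (h0 ▸ hle) (by positivity))
  rwa [← sum_mul, mul_comm, ← show A.trace = ∑ i, hA.eigenvalues i from
    hA.trace_eq_sum_eigenvalues] at h

lemma sumKEig_le_min_mul {c : ℝ} (hc : ∀ i, hA.eigenvalues i ≤ c) :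
    sumKEig k A hA ≤ (min k (Fintype.card V) : ℕ) * c := by
  obtain ⟨s, hcard, hsum⟩ := exists_sumKEig_eq_sum hA k
  rw [hsum, ← hcard, ← nsmul_eq_mul]
  exact sum_le_card_nsmul s _ c fun i _ ↦ hc i

lemma eigenvalues_le_sumKEig_one (i : V) : hA.eigenvalues i ≤ sumKEig 1 A hA := by
  have hcard : #{i} = min 1 (Fintype.card V) := by
    rw [card_singleton, min_eq_left (Fintype.card_pos_iff.2 ⟨i⟩)]
  simpa using sum_eigenvalues_le_sumKEig hA hcard

lemma sumKEig_le_trace (hA : A.PosSemidef) : sumKEig k A hA.isHermitian ≤ A.trace := by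
  obtain ⟨s, -, hsum⟩ := exists_sumKEig_eq_sum hA.isHermitian k
  calc sumKEig k A hA.isHermitian = ∑ i ∈ s, hA.isHermitian.eigenvalues i := hsum
    _ ≤ ∑ i, hA.isHermitian.eigenvalues i :=
        sum_le_sum_of_subset_of_nonneg s.subset_univ fun i _ _ ↦ hA.eigenvalues_nonneg i
    _ = A.trace := hA.isHermitian.trace_eq_sum_eigenvalues.symm

variable {k} in
lemma trace_le_sumKEig_of_le {l : ℕ} (hkl : k ≤ l) (hk : A.trace ≤ sumKEig k A hA) :
    A.trace ≤ sumKEig l A hA := by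
  obtain ⟨s, hcard, hsum⟩ := exists_sumKEig_eq_sum hA k
  have hab : ((min k (Fintype.card V) : ℕ) : ℝ) ≤ (min l (Fintype.card V) : ℕ) :=
    Nat.cast_le.2 (min_le_min_right _ hkl)
  have hbn : ((min l (Fintype.card V) : ℕ) : ℝ) ≤ Fintype.card V := Nat.cast_le.2 (min_le_right _ _)
  have hcard' : (#s : ℝ) = (min k (Fintype.card V) : ℕ) := congrArg Nat.cast hcard
  set a : ℝ := ((min k (Fintype.card V) : ℕ) : ℝ)
  set b : ℝ := ((min l (Fintype.card V) : ℕ) : ℝ)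
  -- Weight `1` on the top `k` eigenvalues and `t` on the others, so that the total weight is `b`.
  obtain ⟨t, ht₀, ht₁, ht⟩ :
      ∃ t : ℝ, 0 ≤ t ∧ t ≤ 1 ∧ t * (Fintype.card V - a) = b - a :=
    ⟨(b - a) / (Fintype.card V - a), div_nonneg (by linarith) (by linarith),
      div_le_one_of_le₀ (by linarith) (by linarith),
      div_mul_cancel_of_imp fun h ↦ by linarith⟩
  have htotal : ∑ i, (t + if i ∈ s then 1 - t else 0) = b := by
    simp only [sum_add_distrib, sum_const, card_univ, sum_ite_mem, univ_inter, nsmul_eq_mul,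
      hcard']
    linarith
  calc A.trace ≤ t * A.trace + (1 - t) * sumKEig k A hA := by nlinarith
    _ = ∑ i, hA.eigenvalues i * (t + if i ∈ s then 1 - t else 0) := by
        simp only [mul_add, sum_add_distrib, ← sum_mul, mul_ite, mul_zero, sum_ite_mem,
          univ_inter, hsum, hA.trace_eq_sum_eigenvalues, RCLike.ofReal_real_eq_id, id]
        ring
    _ ≤ sumKEig l A hA :=
        sum_eigenvalues_mul_le_sumKEig hA (fun i ↦ by split_ifs <;> linarith)
          (fun i ↦ by split_ifs <;> linarith) htotal

end SumKEig

section AveragingProjection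

variable {V : Type*} [Fintype V]

variable (V) in
/-- The matrix `J / |V|`, with `J` the all-ones matrix: the orthogonal projection onto the constant
vectors. -/
noncomputable def avgProj : Matrix V V ℝ := (Fintype.card V : ℝ)⁻¹ • vecMulVec 1 1

lemma avgProj_apply (i j : V) : avgProj V i j = (Fintype.card V : ℝ)⁻¹ := by
  simp [avgProj]

lemma isHermitian_avgProj : (avgProj V).IsHermitian := by
  ext i j
  simp [avgProj_apply]

lemma isStarProjection_avgProj [Nonempty V] : IsStarProjection (avgProj V) where
  isIdempotentElem := by
    ext i j
    simp [mul_apply, avgProj_apply]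
  isSelfAdjoint := isHermitian_avgProj

lemma mul_avgProj_of_mulVec_one {M : Matrix V V ℝ} {c : ℝ} (hM : M *ᵥ 1 = c • 1) :
    M * avgProj V = c • avgProj V := by
  rw [avgProj, Matrix.mul_smul, mul_vecMulVec, hM, smul_vecMulVec, smul_comm]

lemma avgProj_mul_of_mulVec_one {M : Matrix V V ℝ} {c : ℝ} (hMh : M.IsHermitian)
    (hM : M *ᵥ 1 = c • 1) : avgProj V * M = c • avgProj V := by
  simpa only [conjTranspose_mul, conjTranspose_smul, isHermitian_avgProj.eq, hMh.eq, star_trivial]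
    using congr($(mul_avgProj_of_mulVec_one hM)ᴴ)

lemma smul_avgProj_le [Nonempty V] {M : Matrix V V ℝ} {c : ℝ} (hM₀ : 0 ≤ M)
    (hM : M *ᵥ 1 = c • 1) : c • avgProj V ≤ M := by
  classical
  have hJ := isStarProjection_avgProj (V := V)
  -- `M - c • avgProj V` is the compression of `M` to the orthogonal complement of the constants.
  have hcompress : (1 - avgProj V) * M * (1 - avgProj V) = M - c • avgProj V := by
    rw [sub_mul, one_mul, mul_sub, mul_one,
      avgProj_mul_of_mulVec_one (nonneg_iff_posSemidef.1 hM₀).isHermitian hM, sub_mul,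
      mul_avgProj_of_mulVec_one hM, smul_mul_assoc, hJ.isIdempotentElem.eq, sub_self, sub_zero]
  rw [← sub_nonneg, ← hcompress]
  exact hJ.one_sub.isSelfAdjoint.conjugate_nonneg hM₀

end AveragingProjection

section GeneralizedTheta

variable {V : Type*} {G : SimpleGraph V} {A : Matrix V V ℝ} {k : ℕ}

/-- The affine constraint in the definition of `𝒜(G)`; symmetry is kept as a separate hypothesis,
as in `gtheta`. -/
def EqOneOffEdges (G : SimpleGraph V) (A : Matrix V V ℝ) : Prop :=
  ∀ i j, ¬ G.Adj i j → A i j = 1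

lemma eqOneOffEdges_vecMulVec_one : EqOneOffEdges G (vecMulVec 1 1) := by
  simp [EqOneOffEdges, vecMulVec_apply]

lemma posSemidef_vecMulVec_one [Finite V] : (vecMulVec 1 1 : Matrix V V ℝ).PosSemidef :=
  posSemidef_vecMulVec_self_star 1

variable [Fintype V]

lemma EqOneOffEdges.trace_eq_card (h : EqOneOffEdges G A) : A.trace = Fintype.card V := by
  simp [trace, h _ _ G.irrefl]

variable [DecidableEq V]

lemma gtheta_le_sumKEig (hA : A.IsHermitian) (h : EqOneOffEdges G A) :
    gtheta k G ≤ sumKEig k A hA := by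
  refine csInf_le ⟨(min k (Fintype.card V) : ℕ) / Fintype.card V * Fintype.card V, ?_⟩
    ⟨A, hA, h, rfl⟩
  rintro _ ⟨B, hB, hBG, rfl⟩
  simpa only [EqOneOffEdges.trace_eq_card hBG] using div_mul_trace_le_sumKEig hB k

lemma le_gtheta {b : ℝ}
    (h : ∀ A (hA : A.IsHermitian), EqOneOffEdges G A → b ≤ sumKEig k A hA) : b ≤ gtheta k G := by
  refine le_csInf
    ⟨_, vecMulVec 1 1, posSemidef_vecMulVec_one.isHermitian, eqOneOffEdges_vecMulVec_one, rfl⟩ ?_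
  rintro _ ⟨A, hA, hAG, rfl⟩
  exact h A hA hAG

lemma gtheta_le_card : gtheta k G ≤ Fintype.card V :=
  calc gtheta k G ≤ sumKEig k _ posSemidef_vecMulVec_one.isHermitian :=
        gtheta_le_sumKEig _ eqOneOffEdges_vecMulVec_one
    _ ≤ (vecMulVec 1 1 : Matrix V V ℝ).trace := sumKEig_le_trace k posSemidef_vecMulVec_one
    _ = Fintype.card V := eqOneOffEdges_vecMulVec_one.trace_eq_card (G := G)

theorem gtheta_eq_card_of_le {l : ℕ} (hkl : k ≤ l) (hk : gtheta k G = Fintype.card V) :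
    gtheta l G = Fintype.card V := by
  refine gtheta_le_card.antisymm (le_gtheta fun A hA hAG ↦ ?_)
  rw [← hAG.trace_eq_card]
  refine trace_le_sumKEig_of_le hA hkl ?_
  rw [hAG.trace_eq_card, ← hk]
  exact gtheta_le_sumKEig hA hAG

theorem gtheta_le_mul_gtheta_one (hk₀ : 0 < k) (hk : k ≤ Fintype.card V) :
    gtheta k G ≤ k * gtheta 1 G := by
  rw [← div_le_iff₀' (by positivity)]
  refine le_gtheta fun A hA hAG ↦ ?_
  rw [div_le_iff₀' (by positivity)]
  calc gtheta k G ≤ sumKEig k A hA := gtheta_le_sumKEig hA hAG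
    _ ≤ (min k (Fintype.card V) : ℕ) * sumKEig 1 A hA :=
        sumKEig_le_min_mul hA k (eigenvalues_le_sumKEig_one hA)
    _ = k * sumKEig 1 A hA := by rw [min_eq_left hk]

/-- Weak duality: `X` is a feasible point of the semidefinite program dual to `ϑ_k(G)`. -/
theorem sum_sum_apply_le_gtheta {X : Matrix V V ℝ} (hX₀ : 0 ≤ X) (hX₁ : X ≤ 1)
    (htr : X.trace = (min k (Fintype.card V) : ℕ)) (hXG : ∀ i j, G.Adj i j → X i j = 0) :
    ∑ i, ∑ j, X i j ≤ gtheta k G := by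
  refine le_gtheta fun A hA hAG ↦ ?_
  calc ∑ i, ∑ j, X i j = ∑ j, ∑ i, X i j := sum_comm
    _ = (A * X).trace := by
        simp only [trace, diag_apply, mul_apply]
        refine sum_congr rfl fun j _ ↦ sum_congr rfl fun i _ ↦ ?_
        by_cases hij : G.Adj i j
        · rw [hXG i j hij, mul_zero]
        · rw [hAG j i fun h ↦ hij h.symm, one_mul]
    _ ≤ sumKEig k A hA := trace_mul_le_sumKEig hA hX₀ hX₁ htr

lemma gtheta_one_le_of_le_algebraMap [Nonempty V] {c : ℝ} (hA : A.IsHermitian)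
    (hAG : EqOneOffEdges G A) (hc : A ≤ algebraMap ℝ _ c) : gtheta 1 G ≤ c := by
  have heig (i : V) : hA.eigenvalues i ≤ c :=
    (le_algebraMap_iff_spectrum_le hA).1 hc _ (hA.eigenvalues_mem_spectrum_real i)
  calc gtheta 1 G ≤ sumKEig 1 A hA := gtheta_le_sumKEig hA hAG
    _ ≤ (min 1 (Fintype.card V) : ℕ) * c := sumKEig_le_min_mul hA 1 heig
    _ = c := by rw [min_eq_left Fintype.card_pos, Nat.cast_one, one_mul]

/-- The Hoffman–Lovász ratio bound. -/
theorem gtheta_one_le_of_isRegularOfDegree [Nonempty V] [DecidableRel G.Adj] {d : ℕ} {τ : ℝ}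
    (hG : G.IsRegularOfDegree d) (hτ : algebraMap ℝ _ (-τ) ≤ G.adjMatrix ℝ) (hpos : 0 < d + τ) :
    gtheta 1 G ≤ Fintype.card V * τ / (d + τ) := by
  set n : ℝ := (Fintype.card V : ℝ) with hn
  set t : ℝ := n / (d + τ) with ht
  have hM₀ : 0 ≤ G.adjMatrix ℝ + algebraMap ℝ _ τ := by
    simpa [neg_le_iff_add_nonneg] using hτ
  have hM : (G.adjMatrix ℝ + algebraMap ℝ _ τ) *ᵥ 1 = (d + τ) • 1 := by
    ext i
    simp [add_mulVec, Algebra.algebraMap_eq_smul_one, smul_mulVec, hG.degree_eq i]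
  have hJ : t • (d + τ) • avgProj V = vecMulVec 1 1 := by
    rw [smul_smul, ht, div_mul_cancel₀ _ hpos.ne', avgProj, smul_smul, ← hn,
      mul_inv_cancel₀ (by positivity), one_smul]
  have hA : (vecMulVec 1 1 - t • G.adjMatrix ℝ).IsHermitian :=
    posSemidef_vecMulVec_one.isHermitian.sub ((G.isHermitian_adjMatrix ℝ).smul (star_trivial t))
  refine gtheta_one_le_of_le_algebraMap hA (fun i j hij ↦ ?_) ?_
  · simp [hij]
  · have hscaled := smul_le_smul_of_nonneg_left (smul_avgProj_le hM₀ hM) (by positivity : 0 ≤ t)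
    rw [hJ, smul_add, ← sub_le_iff_le_add'] at hscaled
    convert hscaled using 1
    rw [mul_div_right_comm, ← ht, Algebra.algebraMap_eq_smul_one, mul_smul,
      Algebra.algebraMap_eq_smul_one]

end GeneralizedTheta

section ProjectionBound

section StarOrderedRing

variable {R : Type*} [Ring R] [StarRing R] [PartialOrder R] [StarOrderedRing R] [Module ℝ R]
  [PosSMulMono ℝ R] {p q : R} {α β γ : ℝ}

lemma smul_add_smul_add_smul_one_sub_nonneg (hp : IsStarProjection p) (hq : IsStarProjection q)
    (hpq : p * q = 0) (hα : 0 ≤ α) (hβ : 0 ≤ β) (hγ : 0 ≤ γ) :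
    0 ≤ α • p + β • q + γ • (1 - (p + q)) :=
  add_nonneg (add_nonneg (smul_nonneg hα hp.nonneg) (smul_nonneg hβ hq.nonneg))
    (smul_nonneg hγ (hp.add hq hpq).one_sub.nonneg)

lemma smul_add_smul_add_smul_one_sub_le_one (hp : IsStarProjection p) (hq : IsStarProjection q)
    (hpq : p * q = 0) (hα : α ≤ 1) (hβ : β ≤ 1) (hγ : γ ≤ 1) :
    α • p + β • q + γ • (1 - (p + q)) ≤ 1 := by
  rw [← sub_nonneg]
  convert smul_add_smul_add_smul_one_sub_nonneg hp hq hpq (sub_nonneg.2 hα) (sub_nonneg.2 hβ)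
    (sub_nonneg.2 hγ) using 1
  module

end StarOrderedRing

variable {V : Type*} [Fintype V] [DecidableEq V] [Nonempty V] {G : SimpleGraph V}
  {P : Matrix V V ℝ} {k : ℕ} {p α β γ : ℝ}

theorem card_mul_le_gtheta_of_isStarProjection (hP : IsStarProjection P) (hP1 : P *ᵥ 1 = 0)
    (hPG : ∀ i j, G.Adj i j → Fintype.card V * P i j = -p)
    (hα : α ∈ Set.Icc 0 1) (hβ : β ∈ Set.Icc 0 1) (hγ : γ ∈ Set.Icc 0 1)
    (hedge : α - γ = (β - γ) * p)
    (htrace : α + β * P.trace + γ * (Fintype.card V - 1 - P.trace) =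
      (min k (Fintype.card V) : ℕ)) :
    Fintype.card V * α ≤ gtheta k G := by
  have hcard : (Fintype.card V : ℝ) ≠ 0 := by positivity
  have hJ := isStarProjection_avgProj (V := V)
  have hJP : avgProj V * P = 0 := by
    simpa using avgProj_mul_of_mulVec_one hP.isSelfAdjoint (c := 0) (by simpa using hP1)
  have hJtrace : (avgProj V).trace = 1 := by
    simp [trace, avgProj_apply]
  set X := α • avgProj V + β • P + γ • (1 - (avgProj V + P)) with hX
  have hXedge (i j : V) (hij : G.Adj i j) : X i j = 0 := by
    refine mul_left_cancel₀ hcard ?_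
    simp only [hX, Matrix.add_apply, Matrix.sub_apply, Matrix.smul_apply, smul_eq_mul,
      avgProj_apply, one_apply_ne hij.ne]
    linear_combination (α - γ) * mul_inv_cancel₀ hcard + (β - γ) * hPG i j hij + hedge
  have hXtrace : X.trace = (min k (Fintype.card V) : ℕ) := by
    simp only [hX, trace_add, trace_smul, trace_sub, trace_one, hJtrace, smul_eq_mul, ← htrace]
    ring
  have hXone : X *ᵥ 1 = α • 1 := by
    have hJone : avgProj V *ᵥ 1 = 1 := by ext i; simp [mulVec, dotProduct, avgProj_apply]
    simp [hX, add_mulVec, sub_mulVec, smul_mulVec, hJone, hP1]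
  calc Fintype.card V * α = ∑ i, (X *ᵥ 1) i := by simp [hXone]
    _ = ∑ i, ∑ j, X i j := by simp [mulVec, dotProduct]
    _ ≤ gtheta k G := sum_sum_apply_le_gtheta
        (smul_add_smul_add_smul_one_sub_nonneg hJ hP hJP hα.1 hβ.1 hγ.1)
        (smul_add_smul_add_smul_one_sub_le_one hJ hP hJP hα.2 hβ.2 hγ.2) hXtrace hXedge

end ProjectionBound

section CycleSpectrum

open Polynomial.Chebyshev (T)

lemma add_nsmul_add_sub_nsmul_eq_chebyshev {M R : Type*} [AddCommGroup M] [CommRing R]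
    {v : M → R} {g : M} {x : R} (hv : ∀ i, v (i + g) + v (i - g) = 2 * x * v i) (k : ℕ) (i : M) :
    v (i + k • g) + v (i - k • g) = 2 * (T R k).eval x * v i := by
  induction k using Nat.twoStepInduction generalizing i with
  | zero => simp [two_mul]
  | one => simpa using hv i
  | more k ih ih' =>
    have hplus := hv (i + (k + 1) • g)
    rw [show i + (k + 1) • g + g = i + (k + 2) • g by module,
      show i + (k + 1) • g - g = i + k • g by module] at hplus
    have hminus := hv (i - (k + 1) • g)
    rw [show i - (k + 1) • g + g = i - k • g by module,
      show i - (k + 1) • g - g = i - (k + 2) • g by module] at hminus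
    have hT : (T R (k + 2 : ℕ)).eval x = 2 * x * (T R (k + 1 : ℕ)).eval x - (T R k).eval x := by
      simp [Polynomial.Chebyshev.T_add_two]
    rw [hT]
    linear_combination hplus + hminus - ih i + 2 * x * ih' i

lemma neg_cos_pi_div_le_of_eval_chebyshev_eq_one {n : ℕ} (hn : Odd n) {x : ℝ}
    (hx : (T ℝ n).eval x = 1) : -Real.cos (Real.pi / n) ≤ x := by
  obtain ⟨k, hkn, hk, rfl⟩ := (Polynomial.Chebyshev.eval_T_real_eq_one_iff hn.pos.ne' x).1 hx
  have hlt : k + 1 ≤ n := hkn.lt_of_ne (by rintro rfl; exact Nat.not_even_iff_odd.2 hn hk)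
  have hn0 : (0 : ℝ) < n := mod_cast hn.pos
  rw [← Real.cos_pi_sub]
  have hk1 : (k + 1 : ℝ) ≤ n := mod_cast hlt
  refine Real.cos_le_cos_of_nonneg_of_le_pi (by positivity) ?_ ?_
  · exact sub_le_self _ (by positivity)
  · rw [le_sub_iff_add_le, ← add_div, div_le_iff₀ hn0]
    nlinarith [Real.pi_pos]

lemma adjMatrix_cycleGraph_mulVec {n : ℕ} (v : Fin (n + 3) → ℝ) (i : Fin (n + 3)) :
    ((cycleGraph (n + 3)).adjMatrix ℝ *ᵥ v) i = v (i + 1) + v (i - 1) := by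
  have hne : i - 1 ≠ i + 1 := by
    rw [Ne, sub_eq_iff_eq_add, add_assoc, left_eq_add]
    exact ne_of_beq_false rfl
  rw [adjMatrix_mulVec_apply, cycleGraph_neighborFinset, sum_pair hne, add_comm]

lemma algebraMap_le_adjMatrix_cycleGraph {n : ℕ} (hodd : Odd n) (hn : 3 ≤ n) :
    algebraMap ℝ _ (-(2 * Real.cos (Real.pi / n))) ≤ (cycleGraph n).adjMatrix ℝ := by
  obtain ⟨m, rfl⟩ := Nat.exists_eq_add_of_le' hn
  have hA := (cycleGraph (m + 3)).isHermitian_adjMatrix ℝ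
  rw [algebraMap_le_iff_le_spectrum hA]
  intro μ hμ
  rw [← spectrum_toLin', ← Module.End.hasEigenvalue_iff_mem_spectrum] at hμ
  obtain ⟨v, hv⟩ := hμ.exists_hasEigenvector
  have hrec (i : Fin (m + 3)) : v (i + 1) + v (i - 1) = 2 * (μ / 2) * v i := by
    rw [← adjMatrix_cycleGraph_mulVec, ← toLin'_apply, hv.apply_eq_smul, Pi.smul_apply, smul_eq_mul]
    ring
  obtain ⟨i, hi⟩ := Function.ne_iff.1 hv.2
  have hcheb := add_nsmul_add_sub_nsmul_eq_chebyshev hrec (m + 3) i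
  have hperiod : (m + 3) • (1 : Fin (m + 3)) = 0 := by
    simpa using card_nsmul_eq_zero (x := (1 : Fin (m + 3)))
  rw [hperiod, add_zero, sub_zero] at hcheb
  have hone : (T ℝ (m + 3 : ℕ)).eval (μ / 2) = 1 := by
    refine mul_right_cancel₀ hi ?_
    linarith
  linarith [neg_cos_pi_div_le_of_eval_chebyshev_eq_one hodd hone]

end CycleSpectrum

section FrequencyProjection

open Real

variable {n d : ℕ}

lemma sum_fin_cos_add_eq_zero (hd : ¬ n ∣ d) (b : ℝ) :
    ∑ i : Fin n, cos (2 * π * d / n * (i : ℕ) + b) = 0 := by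
  rcases n.eq_zero_or_pos with rfl | hn
  · simp
  have hn' : (n : ℝ) ≠ 0 := by positivity
  have hsin : sin (2 * π * d / n / 2) ≠ 0 := by
    rw [Ne, sin_eq_zero_iff]
    rintro ⟨k, hk⟩
    have hk' : (k : ℝ) * n = d := by
      field_simp at hk
      linarith
    exact hd (Int.natCast_dvd_natCast.1 ⟨k, by rw [mul_comm]; exact_mod_cast hk'.symm⟩)
  have hsin' : sin (n * (2 * π * d / n) / 2) = 0 := by
    rw [mul_div_cancel₀ _ hn', mul_assoc, mul_div_cancel_left₀ _ two_ne_zero, mul_comm]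
    exact sin_nat_mul_pi d
  rw [Fin.sum_univ_eq_sum_range fun i ↦ cos (2 * π * d / n * i + b)]
  refine (mul_eq_zero.1 ?_).resolve_left hsin
  rw [sin_mul_sum_cos, hsin', zero_mul]

variable (n d) in
/-- The orthogonal projection onto the span of the `d`-th discrete Fourier modes `cos (2πdi/n)` and
`sin (2πdi/n)`, valid when these two are independent, i.e. when `n` does not divide `2d`. -/
noncomputable def freqProj : Matrix (Fin n) (Fin n) ℝ :=
  Matrix.of fun a b ↦ 2 / n * cos (2 * π * d / n * ((a : ℕ) - (b : ℕ) : ℝ))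

lemma freqProj_apply (a b : Fin n) :
    freqProj n d a b = 2 / n * cos (2 * π * d / n * ((a : ℕ) - (b : ℕ) : ℝ)) := rfl

lemma freqProj_mul_self (hd : ¬ n ∣ 2 * d) : freqProj n d * freqProj n d = freqProj n d := by
  ext a c
  have hn : (n : ℝ) ≠ 0 := by simpa using a.pos.ne'
  set θ : ℝ := 2 * π * d / n with hθ
  have hprod (b : Fin n) : freqProj n d a b * freqProj n d b c = 2 / n ^ 2 *
      (cos (θ * ((a : ℕ) - (c : ℕ))) +
        cos (2 * π * (2 * d : ℕ) / n * (b : ℕ) + -(θ * ((a : ℕ) + (c : ℕ))))) := by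
    have hθ' : 2 * π * (2 * d : ℕ) / n = 2 * θ := by push_cast [hθ]; ring
    have hcos : 2 * cos (θ * ((a : ℕ) - (b : ℕ))) * cos (θ * ((b : ℕ) - (c : ℕ))) =
        cos (θ * ((a : ℕ) - (c : ℕ))) + cos (2 * θ * (b : ℕ) + -(θ * ((a : ℕ) + (c : ℕ)))) := by
      rw [two_mul_cos_mul_cos, add_comm, ← cos_neg (_ - _)]
      ring_nf
    rw [freqProj_apply, freqProj_apply, hθ', ← hθ]
    linear_combination 2 / (n : ℝ) ^ 2 * hcos
  rw [mul_apply, sum_congr rfl fun b _ ↦ hprod b, ← mul_sum, sum_add_distrib,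
    sum_fin_cos_add_eq_zero hd, add_zero, sum_const, card_univ, Fintype.card_fin, nsmul_eq_mul,
    freqProj_apply, ← mul_assoc]
  congr 1
  field_simp

lemma isHermitian_freqProj : (freqProj n d).IsHermitian := by
  ext a b
  rw [conjTranspose_apply, star_trivial, freqProj_apply, freqProj_apply, ← cos_neg]
  ring_nf

lemma isStarProjection_freqProj (hd : ¬ n ∣ 2 * d) : IsStarProjection (freqProj n d) :=
  ⟨freqProj_mul_self hd, isHermitian_freqProj⟩

lemma freqProj_mulVec_one (hd : ¬ n ∣ d) : freqProj n d *ᵥ 1 = 0 := by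
  ext a
  have hneg (b : Fin n) : cos (2 * π * d / n * ((a : ℕ) - (b : ℕ) : ℝ)) =
      cos (2 * π * d / n * (b : ℕ) + -(2 * π * d / n * (a : ℕ))) := by
    rw [← cos_neg]
    ring_nf
  simp [mulVec, dotProduct, freqProj_apply, ← mul_sum, hneg, sum_fin_cos_add_eq_zero hd]

lemma trace_freqProj (hn : n ≠ 0) : (freqProj n d).trace = 2 := by
  simp [trace, freqProj_apply, mul_div_cancel₀, hn]

lemma freqProj_apply_eq_cos_sub_val (a b : Fin n) :
    freqProj n d a b = 2 / n * cos (2 * π * d / n * ((a - b : Fin n) : ℕ)) := by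
  have hn : (n : ℝ) ≠ 0 := by simpa using a.pos.ne'
  rw [freqProj_apply]
  rcases le_or_gt b a with hle | hlt
  · rw [Fin.coe_sub_iff_le.2 hle, Nat.cast_sub hle]
  · rw [Fin.coe_sub_iff_lt.2 hlt, Nat.cast_sub (by omega), Nat.cast_add, add_sub_assoc, mul_add,
      div_mul_cancel₀ _ hn, add_comm, mul_comm _ (d : ℝ), cos_add_nat_mul_two_pi]

lemma freqProj_apply_of_cycleGraph_adj {a b : Fin n} (hab : (cycleGraph n).Adj a b) :
    freqProj n d a b = 2 / n * cos (2 * π * d / n) := by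
  rcases cycleGraph_adj'.1 hab with h | h
  · rw [freqProj_apply_eq_cos_sub_val, h, Nat.cast_one, mul_one]
  · rw [← isHermitian_freqProj.apply, star_trivial, freqProj_apply_eq_cos_sub_val, h, Nat.cast_one,
      mul_one]

end FrequencyProjection

section OddCycle

open Real

variable {n : ℕ}

lemma one_half_le_cos_pi_div (hn : 3 ≤ n) : 1 / 2 ≤ cos (π / n) := by
  rw [← cos_pi_div_three]
  refine cos_le_cos_of_nonneg_of_le_pi (by positivity) (by linarith [pi_pos]) ?_
  gcongr
  exact_mod_cast hn

lemma gtheta_one_cycleGraph_le (hodd : Odd n) (hn : 3 ≤ n) :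
    gtheta 1 (cycleGraph n) ≤ n * (cos (π / n) / (1 + cos (π / n))) := by
  have hreg : (cycleGraph n).IsRegularOfDegree 2 := by
    obtain ⟨m, rfl⟩ := Nat.exists_eq_add_of_le' hn
    exact fun _ ↦ cycleGraph_degree_three_le
  have : NeZero n := ⟨by omega⟩
  have hc := one_half_le_cos_pi_div hn
  have hbound := gtheta_one_le_of_isRegularOfDegree hreg
    (algebraMap_le_adjMatrix_cycleGraph hodd hn) (by push_cast; linarith)
  rwa [Fintype.card_fin, Nat.cast_two, ← mul_one_add, mul_div_assoc,
    mul_div_mul_left _ _ two_ne_zero] at hbound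

lemma natCast_mul_freqProj_apply_of_cycleGraph_adj {d : ℕ} {a b : Fin (2 * d + 1)}
    (hab : (cycleGraph (2 * d + 1)).Adj a b) :
    (2 * d + 1 : ℕ) * freqProj (2 * d + 1) d a b = -(2 * cos (π / (2 * d + 1 : ℕ))) := by
  have hangle : 2 * π * d / (2 * d + 1 : ℕ) = π - π / (2 * d + 1 : ℕ) := by
    push_cast
    field_simp
    ring
  rw [freqProj_apply_of_cycleGraph_adj hab, hangle, cos_pi_sub]
  field_simp

lemma mul_le_gtheta_cycleGraph {k : ℕ} {α β γ : ℝ} (hodd : Odd n) (hn : 3 ≤ n) (hkn : k ≤ n)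
    (hα : α ∈ Set.Icc 0 1) (hβ : β ∈ Set.Icc 0 1) (hγ : γ ∈ Set.Icc 0 1)
    (hedge : α - γ = (β - γ) * (2 * cos (π / n))) (htrace : α + 2 * β + γ * (n - 3) = k) :
    n * α ≤ gtheta k (cycleGraph n) := by
  obtain ⟨d, rfl⟩ := hodd
  have hd : ¬ 2 * d + 1 ∣ 2 * d := Nat.not_dvd_of_pos_of_lt (by omega) (by omega)
  simpa using card_mul_le_gtheta_of_isStarProjection (isStarProjection_freqProj hd)
    (freqProj_mulVec_one fun h ↦ hd (h.mul_left 2))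
    (fun a b hab ↦ by simpa using natCast_mul_freqProj_apply_of_cycleGraph_adj hab) hα hβ hγ hedge
    (by rw [trace_freqProj (by omega), Fintype.card_fin, min_eq_left hkn, ← htrace]; ring)

lemma le_gtheta_two_cycleGraph (hodd : Odd n) (hn : 3 ≤ n) :
    n * (2 * cos (π / n) / (1 + cos (π / n))) ≤ gtheta 2 (cycleGraph n) := by
  have hc := one_half_le_cos_pi_div hn
  have hc1 := cos_le_one (π / n)
  set c := cos (π / n)
  refine mul_le_gtheta_cycleGraph (β := 1 / (1 + c)) (γ := 0) hodd hn (by omega)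
    ⟨by positivity, div_le_one_of_le₀ (by linarith) (by linarith)⟩
    ⟨by positivity, div_le_one_of_le₀ (by linarith) (by linarith)⟩ (by simp) ?_ ?_
  · ring
  · field_simp
    push_cast
    ring

lemma gtheta_three_cycleGraph (hodd : Odd n) (hn : 3 ≤ n) : gtheta 3 (cycleGraph n) = n := by
  have hc := one_half_le_cos_pi_div hn
  have hc1 := cos_le_one (π / n)
  have hn' : (3 : ℝ) ≤ n := mod_cast hn
  set c := cos (π / n)
  have hle : 2 * c - 1 ≤ c * (n - 1) - 1 := by nlinarith
  -- With `α = 1`, the edge and trace conditions are a linear system for `β` and `γ`.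
  obtain ⟨γ, hγ₀, hγ₁, hγ⟩ : ∃ γ : ℝ, 0 ≤ γ ∧ γ ≤ 1 ∧ γ * (c * (n - 1) - 1) = 2 * c - 1 :=
    ⟨(2 * c - 1) / (c * (n - 1) - 1), div_nonneg (by linarith) (by linarith),
      div_le_one_of_le₀ hle (by linarith), div_mul_cancel_of_imp fun h ↦ by linarith⟩
  refine le_antisymm (by simpa using gtheta_le_card (G := cycleGraph n) (k := 3)) ?_
  rw [← mul_one (n : ℝ)]
  refine mul_le_gtheta_cycleGraph (β := 1 - γ * (n - 3) / 2) (γ := γ) hodd hn hn (by simp)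
    ⟨?_, ?_⟩ ⟨hγ₀, hγ₁⟩ ?_ ?_
  · nlinarith
  · nlinarith
  · linear_combination hγ
  · push_cast
    ring

end OddCycle

theorem stmt_7 (n : ℕ) (hodd : Odd n) (hn : 1 < n) :
    gtheta 2 (SimpleGraph.cycleGraph n) = 2 * gtheta 1 (SimpleGraph.cycleGraph n) ∧
    ∀ k : ℕ, 3 ≤ k → gtheta k (SimpleGraph.cycleGraph n) = (n : ℝ) := by
  have hn₃ : 3 ≤ n := by
    obtain ⟨d, rfl⟩ := hodd
    omega
  refine ⟨le_antisymm ?_ ?_, fun k hk ↦ ?_⟩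
  · exact_mod_cast gtheta_le_mul_gtheta_one two_pos ((Fintype.card_fin n).symm ▸ hn)
  · calc 2 * gtheta 1 (cycleGraph n)
        ≤ 2 * (n * (Real.cos (Real.pi / n) / (1 + Real.cos (Real.pi / n)))) := by
          gcongr
          exact gtheta_one_cycleGraph_le hodd hn₃
      _ = n * (2 * Real.cos (Real.pi / n) / (1 + Real.cos (Real.pi / n))) := by ring
      _ ≤ gtheta 2 (cycleGraph n) := le_gtheta_two_cycleGraph hodd hn₃
  · have hthree : gtheta 3 (cycleGraph n) = Fintype.card (Fin n) := by
      rw [gtheta_three_cycleGraph hodd hn₃, Fintype.card_fin]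
    rw [gtheta_eq_card_of_le hk hthree, Fintype.card_fin]
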